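/- arXiv:2508.11972 — 2 statements merged into one kernel-verified Lean document; each statement's English description precedes it below -/
import Mathlib

section
/- For every L_⊳-formula φ: φ ∈ ICK ⊕ (p ⊳ p) if and only if φ is valid on every conditional Kripke frame (X, ≤, 𝓡) satisfying R_a[x] ⊆ a for all worlds x ∈ X and all upsets a. -/
/-! ## The conditional language `L_⊳` -/

/-- Formulas of the conditional language `L_⊳`, with proposition letters
indexed by the countable set `ℕ`. -/
inductive CForm : Type where
  | var : ℕ → CForm
  | bot : CForm
  | and : CForm → CForm → CForm
  | or : CForm → CForm → CForm
  | imp : CForm → CForm → CForm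
  | cond : CForm → CForm → CForm

/-- `⊤ := ⊥ → ⊥`. -/
def cTop : CForm := CForm.imp CForm.bot CForm.bot

/-- `φ ↔ ψ := (φ → ψ) ∧ (ψ → φ)`. -/
def cIff (φ ψ : CForm) : CForm := CForm.and (CForm.imp φ ψ) (CForm.imp ψ φ)

/-- Uniform substitution of formulas for proposition letters. -/
def psubst (σ : ℕ → CForm) : CForm → CForm
  | CForm.var q => σ q
  | CForm.bot => CForm.bot
  | CForm.and φ ψ => CForm.and (psubst σ φ) (psubst σ ψ)
  | CForm.or φ ψ => CForm.or (psubst σ φ) (psubst σ ψ)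
  | CForm.imp φ ψ => CForm.imp (psubst σ φ) (psubst σ ψ)
  | CForm.cond φ ψ => CForm.cond (psubst σ φ) (psubst σ ψ)

/-- The logic `ICK ⊕ Γ`: the smallest set of `L_⊳`-formulas containing an
axiomatisation of intuitionistic propositional logic, the formulas of `Γ`, the
axioms `(k_c)` and `(n_c)`, closed under uniform substitution, modus ponens and
the two congruence rules. -/
inductive ICK (Γ : Set CForm) : CForm → Prop where
  | prem {φ : CForm} : φ ∈ Γ → ICK Γ φ
  | a1 : ICK Γ (CForm.imp (CForm.and (CForm.var 0) (CForm.var 1)) (CForm.var 0))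
  | a2 : ICK Γ (CForm.imp (CForm.and (CForm.var 0) (CForm.var 1)) (CForm.var 1))
  | a3 : ICK Γ (CForm.imp (CForm.imp (CForm.var 0) (CForm.var 1))
      (CForm.imp (CForm.imp (CForm.var 0) (CForm.var 2))
        (CForm.imp (CForm.var 0) (CForm.and (CForm.var 1) (CForm.var 2)))))
  | a4 : ICK Γ (CForm.imp (CForm.var 0) (CForm.or (CForm.var 0) (CForm.var 1)))
  | a5 : ICK Γ (CForm.imp (CForm.var 1) (CForm.or (CForm.var 0) (CForm.var 1)))
  | a6 : ICK Γ (CForm.imp (CForm.imp (CForm.var 0) (CForm.var 2))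
      (CForm.imp (CForm.imp (CForm.var 1) (CForm.var 2))
        (CForm.imp (CForm.or (CForm.var 0) (CForm.var 1)) (CForm.var 2))))
  | a7 : ICK Γ (CForm.imp CForm.bot (CForm.var 0))
  | a8 : ICK Γ (CForm.imp (CForm.var 0) (CForm.imp (CForm.var 1) (CForm.var 0)))
  | a9 : ICK Γ (CForm.imp
      (CForm.imp (CForm.var 0) (CForm.imp (CForm.var 1) (CForm.var 2)))
      (CForm.imp (CForm.imp (CForm.var 0) (CForm.var 1))
        (CForm.imp (CForm.var 0) (CForm.var 2))))
  | kc : ICK Γ (cIff (CForm.cond (CForm.var 0) (CForm.and (CForm.var 1) (CForm.var 2)))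
      (CForm.and (CForm.cond (CForm.var 0) (CForm.var 1))
        (CForm.cond (CForm.var 0) (CForm.var 2))))
  | nc : ICK Γ (cIff (CForm.cond (CForm.var 0) cTop) cTop)
  | subst {φ : CForm} (σ : ℕ → CForm) : ICK Γ φ → ICK Γ (psubst σ φ)
  | mp {φ ψ : CForm} : ICK Γ (CForm.imp φ ψ) → ICK Γ φ → ICK Γ ψ
  | congL {φ ψ χ : CForm} :
      ICK Γ (cIff φ ψ) → ICK Γ (cIff (CForm.cond φ χ) (CForm.cond ψ χ))
  | congR {φ ψ χ : CForm} :
      ICK Γ (cIff φ ψ) → ICK Γ (cIff (CForm.cond χ φ) (CForm.cond χ ψ))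

/-! ## Conditional Kripke frames and semantics -/

/-- `a` is an upset (upward closed set) w.r.t. the relation `le`. -/
def IsUpset {X : Type} (le : X → X → Prop) (a : Set X) : Prop :=
  ∀ ⦃x y : X⦄, le x y → x ∈ a → y ∈ a

/-- The upward closure `↑s` of a set `s` w.r.t. the relation `le`. -/
def upCl {X : Type} (le : X → X → Prop) (s : Set X) : Set X :=
  {z | ∃ y ∈ s, le y z}

/-- Truth sets of `L_⊳`-formulas, by intuitionistic Kripke semantics for the
propositional connectives, where `x ⊨ φ ⊳ ψ` iff every `y` with
`x R_{V(φ)} y` satisfies `ψ` (here `V(φ)` is the truth set of `φ`). -/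
def csat {X : Type} (le : X → X → Prop) (R : Set X → X → X → Prop)
    (V : ℕ → Set X) : CForm → Set X
  | CForm.var p => V p
  | CForm.bot => ∅
  | CForm.and φ ψ => csat le R V φ ∩ csat le R V ψ
  | CForm.or φ ψ => csat le R V φ ∪ csat le R V ψ
  | CForm.imp φ ψ => {x | ∀ y, le x y → y ∈ csat le R V φ → y ∈ csat le R V ψ}
  | CForm.cond φ ψ => {x | ∀ y, R (csat le R V φ) x y → y ∈ csat le R V ψ}

/-- A conditional Kripke frame: a nonempty preordered set `(X, le)` with a
family of relations `R a` (indexed by the upsets `a`) satisfying the coherence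
condition `(≤ ∘ R_a) ⊆ (R_a ∘ ≤)`. -/
structure CondFrame where
  X : Type
  ne : Nonempty X
  le : X → X → Prop
  le_refl : ∀ x, le x x
  le_trans : ∀ ⦃x y z⦄, le x y → le y z → le x z
  R : Set X → X → X → Prop
  coh : ∀ a : Set X, IsUpset le a →
    ∀ ⦃x y z⦄, le x y → R a y z → ∃ w, R a x w ∧ le w z

/-- Validity on a conditional Kripke frame: truth at every world under every
valuation of the proposition letters by upsets. -/
def CondFrame.valid (F : CondFrame) (φ : CForm) : Prop :=
  ∀ V : ℕ → Set F.X, (∀ p, IsUpset F.le (V p)) → ∀ x, x ∈ csat F.le F.R V φ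

/-! ## Conditional Heyting algebras -/

/-- A conditional Heyting algebra: a Heyting algebra with a binary operation
`cond` (written `⊳` in the paper) preserving finite meets in its second
argument. -/
class CondHeyting (A : Type) extends HeytingAlgebra A where
  cond : A → A → A
  cond_inf : ∀ a b c : A, cond a (b ⊓ c) = cond a b ⊓ cond a c
  cond_top : ∀ a : A, cond a ⊤ = ⊤

/-- Evaluation of an `L_⊳`-formula in a conditional Heyting algebra under an
assignment `σ` of the proposition letters. -/
def evalCHA {A : Type} [CondHeyting A] (σ : ℕ → A) : CForm → A
  | CForm.var p => σ p
  | CForm.bot => ⊥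
  | CForm.and φ ψ => evalCHA σ φ ⊓ evalCHA σ ψ
  | CForm.or φ ψ => evalCHA σ φ ⊔ evalCHA σ ψ
  | CForm.imp φ ψ => evalCHA σ φ ⇨ evalCHA σ ψ
  | CForm.cond φ ψ => CondHeyting.cond (evalCHA σ φ) (evalCHA σ ψ)

/-- A formula is satisfied in a conditional Heyting algebra if it evaluates to
`⊤` under every assignment. -/
def chaSat (A : Type) [CondHeyting A] (φ : CForm) : Prop :=
  ∀ σ : ℕ → A, evalCHA σ φ = ⊤

/-- A prime filter: a proper, nonempty, upward closed subset, closed under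
binary meets, such that `a ⊔ b ∈ x` implies `a ∈ x` or `b ∈ x`. -/
def IsPrimeFilter {A : Type} [Lattice A] (x : Set A) : Prop :=
  x.Nonempty ∧ x ≠ Set.univ ∧
  (∀ ⦃a b : A⦄, a ∈ x → a ≤ b → b ∈ x) ∧
  (∀ ⦃a b : A⦄, a ∈ x → b ∈ x → a ⊓ b ∈ x) ∧
  (∀ ⦃a b : A⦄, a ⊔ b ∈ x → a ∈ x ∨ b ∈ x)

/-! ## General conditional frames -/

/-- A general conditional frame `(X, ≤, 𝓡, A)`. -/
structure GenFrame where
  X : Type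
  le : X → X → Prop
  le_refl : ∀ x, le x x
  le_trans : ∀ ⦃x y z⦄, le x y → le y z → le x z
  le_antisymm : ∀ ⦃x y⦄, le x y → le y x → x = y
  A : Set (Set X)
  upA : ∀ a ∈ A, IsUpset le a
  univ_mem : Set.univ ∈ A
  empty_mem : ∅ ∈ A
  inter_mem : ∀ a ∈ A, ∀ b ∈ A, a ∩ b ∈ A
  union_mem : ∀ a ∈ A, ∀ b ∈ A, a ∪ b ∈ A
  R : Set X → X → X → Prop
  himp_mem : ∀ a ∈ A, ∀ b ∈ A, {x | ∀ y, le x y → y ∈ a → y ∈ b} ∈ A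
  cimp_mem : ∀ a ∈ A, ∀ b ∈ A, {x | ∀ y, R a x y → y ∈ b} ∈ A
  coh : ∀ a ∈ A, ∀ ⦃x y z⦄, le x y → R a y z → ∃ w, R a x w ∧ le w z

/-- The carrier of the complex algebra of a general frame: the admissible
upsets. -/
def GenFrame.AUp (G : GenFrame) : Type := {a : Set G.X // a ∈ G.A}

instance GenFrame.instLatticeAUp (G : GenFrame) : Lattice G.AUp where
  le a b := a.val ⊆ b.val
  le_refl a := subset_rfl
  le_trans a b c h h' := Set.Subset.trans h h'
  le_antisymm a b h h' := Subtype.ext (subset_antisymm h h')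
  sup a b := ⟨a.val ∪ b.val, G.union_mem _ a.2 _ b.2⟩
  le_sup_left a b := Set.subset_union_left
  le_sup_right a b := Set.subset_union_right
  sup_le a b c h h' := Set.union_subset h h'
  inf a b := ⟨a.val ∩ b.val, G.inter_mem _ a.2 _ b.2⟩
  inf_le_left a b := Set.inter_subset_left
  inf_le_right a b := Set.inter_subset_right
  le_inf a b c h h' := Set.subset_inter h h'

instance GenFrame.instHeytingAUp (G : GenFrame) : HeytingAlgebra G.AUp :=
  { GenFrame.instLatticeAUp G with
    top := ⟨Set.univ, G.univ_mem⟩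
    le_top := fun a => Set.subset_univ _
    bot := ⟨∅, G.empty_mem⟩
    bot_le := fun a => Set.empty_subset _
    himp := fun a b => ⟨{x | ∀ y, G.le x y → y ∈ a.val → y ∈ b.val},
      G.himp_mem _ a.2 _ b.2⟩
    compl := fun a => ⟨{x | ∀ y, G.le x y → y ∈ a.val → y ∈ (∅ : Set G.X)},
      G.himp_mem _ a.2 _ G.empty_mem⟩
    le_himp_iff := by
      intro a b c
      show a.val ⊆ {x | ∀ y, G.le x y → y ∈ b.val → y ∈ c.val} ↔
        a.val ∩ b.val ⊆ c.val
      constructor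
      · rintro h x ⟨hxa, hxb⟩
        exact h hxa x (G.le_refl x) hxb
      · intro h x hxa y hle hyb
        exact h ⟨G.upA a.val a.2 hle hxa, hyb⟩
    himp_bot := fun a => rfl }

/-- The complex algebra `AUp(G)` of a general frame `G` is a conditional
Heyting algebra, with `a ⊳ b := {x | R_a[x] ⊆ b}`. -/
instance GenFrame.instCondHeytingAUp (G : GenFrame) : CondHeyting G.AUp where
  cond a b := ⟨{x | ∀ y, G.R a.val x y → y ∈ b.val}, G.cimp_mem _ a.2 _ b.2⟩
  cond_inf a b c := Subtype.ext (Set.ext fun x => by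
    show (∀ y, G.R a.val x y → y ∈ b.val ∩ c.val) ↔
      (∀ y, G.R a.val x y → y ∈ b.val) ∧ (∀ y, G.R a.val x y → y ∈ c.val)
    constructor
    · intro h
      exact ⟨fun y hy => (h y hy).1, fun y hy => (h y hy).2⟩
    · rintro ⟨h1, h2⟩ y hy
      exact ⟨h1 y hy, h2 y hy⟩)
  cond_top a := Subtype.ext (Set.ext fun x => by
    show (∀ y, G.R a.val x y → y ∈ (Set.univ : Set G.X)) ↔
      x ∈ (Set.univ : Set G.X)
    exact ⟨fun _ => trivial, fun _ y _ => trivial⟩)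

/-! ## Conditional Esakia spaces -/

/-- A conditional Esakia space: an Esakia space `(X, le, top)` together with a
family of relations `R a` indexed by the clopen upsets `a`, such that
`{x | R_a[x] ⊆ b}` is clopen for clopen upsets `a, b`, each `R_a[x]` is
closed, and `(≤ ∘ R_a ∘ ≤) = R_a`. -/
structure CondEsakia where
  X : Type
  ne : Nonempty X
  le : X → X → Prop
  le_refl : ∀ x, le x x
  le_trans : ∀ ⦃x y z⦄, le x y → le y z → le x z
  le_antisymm : ∀ ⦃x y⦄, le x y → le y x → x = y
  top : TopologicalSpace X
  compact : @CompactSpace X top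
  sep : ∀ x y : X, ¬ le x y →
    ∃ a : Set X, @IsClopen X top a ∧ IsUpset le a ∧ x ∈ a ∧ y ∉ a
  down_clopen : ∀ a : Set X, @IsClopen X top a →
    @IsClopen X top {x | ∃ y ∈ a, le x y}
  R : Set X → X → X → Prop
  box_clopen : ∀ a b : Set X, @IsClopen X top a → IsUpset le a →
    @IsClopen X top b → IsUpset le b →
    @IsClopen X top {x | ∀ y, R a x y → y ∈ b}
  coh : ∀ a : Set X, @IsClopen X top a → IsUpset le a →
    ∀ x z : X, (∃ x' y', le x x' ∧ R a x' y' ∧ le y' z) ↔ R a x z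
  im_closed : ∀ a : Set X, @IsClopen X top a → IsUpset le a →
    ∀ x : X, @IsClosed X top {y | R a x y}

/-- `a` is a clopen upset of the conditional Esakia space `S`. -/
def CondEsakia.ClopUp (S : CondEsakia) (a : Set S.X) : Prop :=
  @IsClopen S.X S.top a ∧ IsUpset S.le a

/-- Validity on a conditional Esakia space: truth at every world under every
valuation of the proposition letters by clopen upsets. -/
def CondEsakia.valid (S : CondEsakia) (φ : CForm) : Prop :=
  ∀ V : ℕ → Set S.X, (∀ p, S.ClopUp (V p)) → ∀ x, x ∈ csat S.le S.R V φ

/-- The family of relations of the empty fill-in `κ_∅(S)`: it agrees with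
`S.R` on clopen upsets and is empty on all other sets. -/
def CondEsakia.emptyFill (S : CondEsakia) : Set S.X → S.X → S.X → Prop :=
  fun a x y => S.ClopUp a ∧ S.R a x y

/-- Validity on the empty fill-in `κ_∅(S)`, a conditional Kripke frame:
truth at every world under every valuation by (arbitrary) upsets. -/
def CondEsakia.emptyFillValid (S : CondEsakia) (φ : CForm) : Prop :=
  ∀ V : ℕ → Set S.X, (∀ p, IsUpset S.le (V p)) →
    ∀ x, x ∈ csat S.le S.emptyFill V φ

/-! ## The modal language `L_□` -/

/-- Formulas of the modal language `L_□`. -/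
inductive MForm : Type where
  | var : ℕ → MForm
  | bot : MForm
  | and : MForm → MForm → MForm
  | or : MForm → MForm → MForm
  | imp : MForm → MForm → MForm
  | box : MForm → MForm

/-- The translation `(−)^p : L_□ → L_⊳`: it fixes proposition letters, `⊥`,
`∧`, `∨`, `→`, and sends `□ψ` to `p ⊳ ψ^p`. -/
def MForm.transl (p : ℕ) : MForm → CForm
  | MForm.var q => CForm.var q
  | MForm.bot => CForm.bot
  | MForm.and φ ψ => CForm.and (φ.transl p) (ψ.transl p)
  | MForm.or φ ψ => CForm.or (φ.transl p) (ψ.transl p)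
  | MForm.imp φ ψ => CForm.imp (φ.transl p) (ψ.transl p)
  | MForm.box φ => CForm.cond (CForm.var p) (φ.transl p)

/-- The proposition letter `p` occurs (as a subformula) in a modal formula. -/
def MForm.occurs (p : ℕ) : MForm → Prop
  | MForm.var q => p = q
  | MForm.bot => False
  | MForm.and φ ψ => φ.occurs p ∨ ψ.occurs p
  | MForm.or φ ψ => φ.occurs p ∨ ψ.occurs p
  | MForm.imp φ ψ => φ.occurs p ∨ ψ.occurs p
  | MForm.box φ => φ.occurs p

/-- Truth sets of `L_□`-formulas in a modal model, by intuitionistic Kripke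
semantics with `x ⊨ □φ` iff every `y` with `x R y` satisfies `φ`. -/
def msat {X : Type} (le : X → X → Prop) (R : X → X → Prop)
    (V : ℕ → Set X) : MForm → Set X
  | MForm.var p => V p
  | MForm.bot => ∅
  | MForm.and φ ψ => msat le R V φ ∩ msat le R V ψ
  | MForm.or φ ψ => msat le R V φ ∪ msat le R V ψ
  | MForm.imp φ ψ => {x | ∀ y, le x y → y ∈ msat le R V φ → y ∈ msat le R V ψ}
  | MForm.box φ => {x | ∀ y, R x y → y ∈ msat le R V φ}

/-- A modal Esakia space: an Esakia space with a relation `R` such that each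
`R[x]` is closed and `R = (≤ ∘ R ∘ ≤)`. -/
structure ModalEsakia where
  X : Type
  ne : Nonempty X
  le : X → X → Prop
  le_refl : ∀ x, le x x
  le_trans : ∀ ⦃x y z⦄, le x y → le y z → le x z
  le_antisymm : ∀ ⦃x y⦄, le x y → le y x → x = y
  top : TopologicalSpace X
  compact : @CompactSpace X top
  sep : ∀ x y : X, ¬ le x y →
    ∃ a : Set X, @IsClopen X top a ∧ IsUpset le a ∧ x ∈ a ∧ y ∉ a
  down_clopen : ∀ a : Set X, @IsClopen X top a →
    @IsClopen X top {x | ∃ y ∈ a, le x y}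
  R : X → X → Prop
  im_closed : ∀ x : X, @IsClosed X top {y | R x y}
  coh : ∀ x z : X, (∃ x' y', le x x' ∧ R x' y' ∧ le y' z) ↔ R x z

/-- Validity on a modal Esakia space: truth everywhere under every valuation
by clopen upsets. -/
def ModalEsakia.valid (M : ModalEsakia) (φ : MForm) : Prop :=
  ∀ V : ℕ → Set M.X, (∀ p, @IsClopen M.X M.top (V p) ∧ IsUpset M.le (V p)) →
    ∀ x, x ∈ msat M.le M.R V φ

/-- Validity on the underlying modal frame `κ(M)` of a modal Esakia space:
truth everywhere under every valuation by arbitrary upsets. -/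
def ModalEsakia.frameValid (M : ModalEsakia) (φ : MForm) : Prop :=
  ∀ V : ℕ → Set M.X, (∀ p, IsUpset M.le (V p)) → ∀ x, x ∈ msat M.le M.R V φ

/-- An `L_□`-formula is d-persistent if its validity on a modal Esakia space
implies its validity on the underlying modal frame. -/
def DPersistent (φ : MForm) : Prop :=
  ∀ M : ModalEsakia, M.valid φ → M.frameValid φ

/-- The axiom `(id)  p ⊳ p`. -/
def axId : CForm := CForm.cond (CForm.var 0) (CForm.var 0)

/-! ## Soundness -/

theorem csat_upset (F : CondFrame) (V : ℕ → Set F.X) (hV : ∀ p, IsUpset F.le (V p)) :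
    ∀ φ : CForm, IsUpset F.le (csat F.le F.R V φ) := by
  intro φ
  induction φ with
  | var p => exact hV p
  | bot => intro x y _ h; exact h
  | and φ ψ ih1 ih2 => intro x y hxy h; exact ⟨ih1 hxy h.1, ih2 hxy h.2⟩
  | or φ ψ ih1 ih2 =>
    intro x y hxy h
    rcases h with h | h
    · exact Or.inl (ih1 hxy h)
    · exact Or.inr (ih2 hxy h)
  | imp φ ψ ih1 ih2 =>
    intro x y hxy h z hyz hz
    exact h z (F.le_trans hxy hyz) hz
  | cond φ ψ ih1 ih2 =>
    intro x y hxy h z hz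
    obtain ⟨w, hw, hwz⟩ := F.coh _ ih1 hxy hz
    exact ih2 hwz (h w hw)

theorem csat_psubst {X : Type} (le : X → X → Prop) (R : Set X → X → X → Prop)
    (V : ℕ → Set X) (σ : ℕ → CForm) (φ : CForm) :
    csat le R V (psubst σ φ) = csat le R (fun p => csat le R V (σ p)) φ := by
  induction φ with
  | var p => rfl
  | bot => rfl
  | and φ ψ ih1 ih2 => simp only [psubst, csat, ih1, ih2]
  | or φ ψ ih1 ih2 => simp only [psubst, csat, ih1, ih2]
  | imp φ ψ ih1 ih2 => simp only [psubst, csat, ih1, ih2]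
  | cond φ ψ ih1 ih2 => simp only [psubst, csat, ih1, ih2]

theorem csat_eq_of_iff (F : CondFrame) (V : ℕ → Set F.X) (φ ψ : CForm)
    (h : ∀ x, x ∈ csat F.le F.R V (cIff φ ψ)) :
    csat F.le F.R V φ = csat F.le F.R V ψ := by
  ext x
  exact ⟨fun hx => (h x).1 x (F.le_refl x) hx, fun hx => (h x).2 x (F.le_refl x) hx⟩

theorem id_soundness (F : CondFrame)
    (hF : ∀ (x : F.X) (a : Set F.X), IsUpset F.le a → ∀ y, F.R a x y → y ∈ a)
    (φ : CForm) (h : ICK {axId} φ) : F.valid φ := by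
  induction h with
  | prem h =>
    obtain rfl := h
    intro V hV x y hy
    exact hF x _ (hV 0) y hy
  | a1 => intro V hV x y _ h; exact h.1
  | a2 => intro V hV x y _ h; exact h.2
  | a3 =>
    intro V hV x y _ h1 z hyz h2 w hzw h3
    exact ⟨h1 w (F.le_trans hyz hzw) h3, h2 w hzw h3⟩
  | a4 => intro V hV x y _ h; exact Or.inl h
  | a5 => intro V hV x y _ h; exact Or.inr h
  | a6 =>
    intro V hV x y _ h1 z hyz h2 w hzw h3
    rcases h3 with h3 | h3
    · exact h1 w (F.le_trans hyz hzw) h3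
    · exact h2 w hzw h3
  | a7 => intro V hV x y _ h; exact h.elim
  | a8 => intro V hV x y _ h z hyz _; exact hV 0 hyz h
  | a9 =>
    intro V hV x y _ h1 z hyz h2 w hzw h3
    exact h1 w (F.le_trans hyz hzw) h3 w (F.le_refl w) (h2 w hzw h3)
  | kc =>
    intro V hV x
    refine ⟨fun y _ h => ⟨fun z hz => (h z hz).1, fun z hz => (h z hz).2⟩, ?_⟩
    intro y _ h z hz
    exact ⟨h.1 z hz, h.2 z hz⟩
  | nc =>
    intro V hV x
    exact ⟨fun y _ _ z _ hz => hz, fun y _ _ z _ w _ hw => hw⟩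
  | subst σ _ ih =>
    intro V hV x
    rw [csat_psubst]
    exact ih _ (fun p => csat_upset F V hV (σ p)) x
  | mp _ _ ih1 ih2 =>
    intro V hV x
    exact ih1 V hV x x (F.le_refl x) (ih2 V hV x)
  | congL _ ih =>
    intro V hV x
    have e := csat_eq_of_iff F V _ _ (ih V hV)
    constructor <;> intro y _ h <;> simpa only [csat, e] using h
  | congR _ ih =>
    intro V hV x
    have e := csat_eq_of_iff F V _ _ (ih V hV)
    constructor <;> intro y _ h <;> simpa only [csat, e] using h

/-! ## Derived rules -/

section Derived

variable {Γ : Set CForm}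

/-- Substitution sending the first three letters to given formulas. -/
def sub3 (α β γ : CForm) : ℕ → CForm
  | 0 => α
  | 1 => β
  | _ => γ

theorem ick_a1 (α β : CForm) : ICK Γ (CForm.imp (CForm.and α β) α) :=
  ICK.subst (sub3 α β β) ICK.a1
theorem ick_a2 (α β : CForm) : ICK Γ (CForm.imp (CForm.and α β) β) :=
  ICK.subst (sub3 α β β) ICK.a2
theorem ick_a3 (α β γ : CForm) : ICK Γ (CForm.imp (CForm.imp α β)
    (CForm.imp (CForm.imp α γ) (CForm.imp α (CForm.and β γ)))) :=
  ICK.subst (sub3 α β γ) ICK.a3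
theorem ick_a4 (α β : CForm) : ICK Γ (CForm.imp α (CForm.or α β)) :=
  ICK.subst (sub3 α β β) ICK.a4
theorem ick_a5 (α β : CForm) : ICK Γ (CForm.imp β (CForm.or α β)) :=
  ICK.subst (sub3 α β β) ICK.a5
theorem ick_a6 (α β γ : CForm) : ICK Γ (CForm.imp (CForm.imp α γ)
    (CForm.imp (CForm.imp β γ) (CForm.imp (CForm.or α β) γ))) :=
  ICK.subst (sub3 α β γ) ICK.a6
theorem ick_a7 (α : CForm) : ICK Γ (CForm.imp CForm.bot α) :=
  ICK.subst (sub3 α α α) ICK.a7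
theorem ick_a8 (α β : CForm) : ICK Γ (CForm.imp α (CForm.imp β α)) :=
  ICK.subst (sub3 α β β) ICK.a8
theorem ick_a9 (α β γ : CForm) : ICK Γ (CForm.imp (CForm.imp α (CForm.imp β γ))
    (CForm.imp (CForm.imp α β) (CForm.imp α γ))) :=
  ICK.subst (sub3 α β γ) ICK.a9
theorem ick_kc (α β γ : CForm) : ICK Γ (cIff (CForm.cond α (CForm.and β γ))
    (CForm.and (CForm.cond α β) (CForm.cond α γ))) :=
  ICK.subst (sub3 α β γ) ICK.kc
theorem ick_nc (α : CForm) : ICK Γ (cIff (CForm.cond α cTop) cTop) :=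
  ICK.subst (sub3 α α α) ICK.nc

theorem ick_refl (α : CForm) : ICK Γ (CForm.imp α α) :=
  ICK.mp (ICK.mp (ick_a9 α (CForm.imp α α) α) (ick_a8 _ _)) (ick_a8 _ _)

theorem ick_k {α : CForm} (β : CForm) (h : ICK Γ α) : ICK Γ (CForm.imp β α) :=
  ICK.mp (ick_a8 _ _) h

theorem ick_and {α β : CForm} (h1 : ICK Γ α) (h2 : ICK Γ β) : ICK Γ (CForm.and α β) :=
  ICK.mp (ICK.mp (ICK.mp (ick_a3 cTop α β) (ick_k _ h1)) (ick_k _ h2)) (ick_refl _)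

theorem ick_fst {α β : CForm} (h : ICK Γ (CForm.and α β)) : ICK Γ α :=
  ICK.mp (ick_a1 _ _) h

theorem ick_snd {α β : CForm} (h : ICK Γ (CForm.and α β)) : ICK Γ β :=
  ICK.mp (ick_a2 _ _) h

theorem ick_nec (α : CForm) {β : CForm} (h : ICK Γ β) : ICK Γ (CForm.cond α β) := by
  have e : ICK Γ (cIff cTop β) := ick_and (ick_k _ h) (ick_k _ (ick_refl _))
  have t : ICK Γ (CForm.cond α cTop) := ICK.mp (ick_snd (ick_nc α)) (ick_refl _)
  exact ICK.mp (ick_fst (ICK.congR e)) t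

/-! ## Theories -/

/-- A theory: contains all theorems, closed under modus ponens. -/
def IsTh (Γ : Set CForm) (T : Set CForm) : Prop :=
  (∀ α, ICK Γ α → α ∈ T) ∧ ∀ α β, CForm.imp α β ∈ T → α ∈ T → β ∈ T

theorem IsTh.app {T : Set CForm} (hT : IsTh Γ T) {α β : CForm}
    (h : ICK Γ (CForm.imp α β)) (ha : α ∈ T) : β ∈ T :=
  hT.2 _ _ (hT.1 _ h) ha

theorem IsTh.and_mem {T : Set CForm} (hT : IsTh Γ T) {α β : CForm}
    (ha : α ∈ T) (hb : β ∈ T) : CForm.and α β ∈ T := by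
  have h1 := hT.app (ick_a3 cTop α β) (hT.app (ick_a8 α cTop) ha)
  have h2 := hT.2 _ _ h1 (hT.app (ick_a8 β cTop) hb)
  exact hT.2 _ _ h2 (hT.1 _ (ick_refl _))

theorem IsTh.add {T : Set CForm} (hT : IsTh Γ T) (α : CForm) :
    IsTh Γ {β | CForm.imp α β ∈ T} := by
  refine ⟨fun β h => hT.1 _ (ick_k _ h), fun β γ h1 h2 => ?_⟩
  exact hT.2 _ _ (hT.app (ick_a9 α β γ) h1) h2

theorem IsTh.condTh {T : Set CForm} (hT : IsTh Γ T) (α : CForm) :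
    IsTh Γ {β | CForm.cond α β ∈ T} := by
  refine ⟨fun β h => hT.1 _ (ick_nec α h), fun β γ h1 h2 => ?_⟩
  have h3 : CForm.cond α (CForm.and (CForm.imp β γ) β) ∈ T :=
    hT.app (ick_snd (ick_kc α _ _)) (hT.and_mem h1 h2)
  -- `(β → γ) ∧ β` is equivalent to `((β → γ) ∧ β) ∧ γ`
  have h4 : ICK Γ (CForm.imp (CForm.and (CForm.imp β γ) β) γ) :=
    ICK.mp (ICK.mp (ick_a9 _ β γ) (ick_a1 _ _)) (ick_a2 _ _)
  have h5 : ICK Γ (cIff (CForm.and (CForm.imp β γ) β)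
      (CForm.and (CForm.and (CForm.imp β γ) β) γ)) :=
    ick_and (ICK.mp (ICK.mp (ick_a3 _ _ _) (ick_refl _)) h4) (ick_a1 _ _)
  have h6 := hT.app (ick_fst (ICK.congR (χ := α) h5)) h3
  exact hT.app (ick_a2 _ _) (hT.app (ick_fst (ick_kc α _ _)) h6)

/-- A prime theory. -/
def IsPrimeTh (Γ : Set CForm) (T : Set CForm) : Prop :=
  IsTh Γ T ∧ CForm.bot ∉ T ∧ ∀ α β, CForm.or α β ∈ T → α ∈ T ∨ β ∈ T

theorem IsTh.extend {T : Set CForm} (hT : IsTh Γ T) {φ : CForm} (hφ : φ ∉ T) :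
    ∃ T', IsPrimeTh Γ T' ∧ T ⊆ T' ∧ φ ∉ T' := by
  obtain ⟨M, hTM, hM⟩ := zorn_subset_nonempty {S | IsTh Γ S ∧ φ ∉ S} (by
    intro c hc hchain hne
    refine ⟨⋃₀ c, ⟨⟨?_, ?_⟩, ?_⟩, fun s hs => Set.subset_sUnion_of_mem hs⟩
    · intro α h
      obtain ⟨s, hs⟩ := hne
      exact ⟨s, hs, (hc hs).1.1 _ h⟩
    · rintro α β ⟨s, hs, h1⟩ ⟨t, ht, h2⟩
      rcases hchain.total hs ht with h | h
      · exact ⟨t, ht, (hc ht).1.2 _ _ (h h1) h2⟩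
      · exact ⟨s, hs, (hc hs).1.2 _ _ h1 (h h2)⟩
    · rintro ⟨s, hs, h⟩
      exact (hc hs).2 h) T ⟨hT, hφ⟩
  have hMt := hM.prop.1
  have hMφ := hM.prop.2
  have key : ∀ α, α ∉ M → CForm.imp α φ ∈ M := by
    intro α hα
    by_contra hn
    have hsub : M ⊆ {β | CForm.imp α β ∈ M} := fun β hβ => hMt.app (ick_a8 _ _) hβ
    have := hM.le_of_ge (y := {β | CForm.imp α β ∈ M}) ⟨hMt.add α, hn⟩ hsub
    exact hα (this (hMt.1 _ (ick_refl α)))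
  refine ⟨M, ⟨hMt, fun hb => hMφ (hMt.app (ick_a7 φ) hb), ?_⟩, hTM, hMφ⟩
  intro α β hαβ
  by_contra hn
  push Not at hn
  exact hMφ (hMt.2 _ _ (hMt.2 _ _ (hMt.app (ick_a6 α β φ) (key α hn.1)) (key β hn.2)) hαβ)

end Derived

/-! ## The canonical frame -/

/-- Worlds of the canonical frame. -/
def CanW (Γ : Set CForm) : Type := {T : Set CForm // IsPrimeTh Γ T}

/-- The set of prime theories containing `φ`. -/
def hat (Γ : Set CForm) (φ : CForm) : Set (CanW Γ) := {x | φ ∈ x.val}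

/-- The canonical order. -/
def canLe (Γ : Set CForm) (x y : CanW Γ) : Prop := x.val ⊆ y.val

/-- The canonical relations. -/
def canR (Γ : Set CForm) (a : Set (CanW Γ)) (x y : CanW Γ) : Prop :=
  ∃ φ, a = hat Γ φ ∧ ∀ ψ, CForm.cond φ ψ ∈ x.val → ψ ∈ y.val

theorem ick_imp_of_hat {Γ : Set CForm} {φ ψ : CForm} (h : hat Γ φ ⊆ hat Γ ψ) :
    ICK Γ (CForm.imp φ ψ) := by
  by_contra hn
  have hth : IsTh Γ {α | ICK Γ α} := ⟨fun _ h => h, fun _ _ h1 h2 => ICK.mp h1 h2⟩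
  obtain ⟨T, hT, hsub, hψ⟩ := (hth.add φ).extend (φ := ψ) hn
  exact hψ (h (show (⟨T, hT⟩ : CanW Γ) ∈ hat Γ φ from hsub (ick_refl φ)))

theorem truth_lemma (Γ : Set CForm) (φ : CForm) :
    csat (canLe Γ) (canR Γ) (fun p => hat Γ (CForm.var p)) φ = hat Γ φ := by
  induction φ with
  | var p => rfl
  | bot =>
    ext x
    exact ⟨fun h => h.elim, fun h => (x.2.2.1 h).elim⟩
  | and φ ψ ih1 ih2 =>
    simp only [csat, ih1, ih2]
    ext x
    exact ⟨fun h => x.2.1.and_mem h.1 h.2,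
      fun h => ⟨x.2.1.app (ick_a1 _ _) h, x.2.1.app (ick_a2 _ _) h⟩⟩
  | or φ ψ ih1 ih2 =>
    simp only [csat, ih1, ih2]
    ext x
    refine ⟨fun h => ?_, fun h => x.2.2.2 _ _ h⟩
    rcases h with h | h
    · exact x.2.1.app (ick_a4 _ _) h
    · exact x.2.1.app (ick_a5 _ _) h
  | imp φ ψ ih1 ih2 =>
    simp only [csat, ih1, ih2]
    ext x
    constructor
    · intro h
      by_contra hn
      obtain ⟨T, hT, hsub, hψ⟩ := (x.2.1.add φ).extend (φ := ψ) hn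
      exact hψ (h ⟨T, hT⟩ (fun β hβ => hsub (x.2.1.app (ick_a8 _ _) hβ))
        (hsub (x.2.1.1 _ (ick_refl φ))))
    · intro h y hxy hy
      exact y.2.1.2 _ _ (hxy h) hy
  | cond φ ψ ih1 ih2 =>
    simp only [csat, ih1, ih2]
    ext x
    constructor
    · intro h
      by_contra hn
      obtain ⟨T, hT, hsub, hψ⟩ := (x.2.1.condTh φ).extend (φ := ψ) hn
      exact hψ (h ⟨T, hT⟩ ⟨φ, rfl, fun χ hχ => hsub hχ⟩)
    · rintro h y ⟨φ', e, hy⟩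
      have heq2 : ICK Γ (cIff φ φ') :=
        ick_and (ick_imp_of_hat e.subset) (ick_imp_of_hat e.symm.subset)
      exact hy ψ (x.2.1.app (ick_fst (ICK.congL heq2)) h)

/-- The canonical frame. -/
def canFrame (Γ : Set CForm) (h : Nonempty (CanW Γ)) : CondFrame where
  X := CanW Γ
  ne := h
  le := canLe Γ
  le_refl _ := subset_rfl
  le_trans _ _ _ h h' := Set.Subset.trans h h'
  R := canR Γ
  coh := by
    rintro a _ x y z hxy ⟨φ, e, hz⟩
    exact ⟨z, ⟨φ, e, fun ψ hψ => hz ψ (hxy hψ)⟩, subset_rfl⟩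

theorem id_complete_aux (φ : CForm)
    (h : ∀ F : CondFrame,
        (∀ (x : F.X) (a : Set F.X), IsUpset F.le a →
          ∀ y, F.R a x y → y ∈ a) → F.valid φ) : ICK {axId} φ := by
  by_contra hn
  have hth : IsTh {axId} {α | ICK {axId} α} := ⟨fun _ h => h, fun _ _ h1 h2 => ICK.mp h1 h2⟩
  obtain ⟨T, hT, -, hφ⟩ := hth.extend (φ := φ) hn
  have hv := h (canFrame {axId} ⟨⟨T, hT⟩⟩) (by
    rintro x a _ y ⟨α, rfl, hy⟩
    exact hy α (x.2.1.1 _ (ICK.subst (sub3 α α α) (ICK.prem (Set.mem_singleton axId)))))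
    (fun p => hat {axId} (CForm.var p)) (fun p x y hxy hx => hxy hx) ⟨T, hT⟩
  have e := truth_lemma {axId} φ
  have hmem : (⟨T, hT⟩ : CanW {axId}) ∈ hat {axId} φ := e ▸ hv
  exact hφ hmem

/-- `ICK ⊕ (p ⊳ p)` is sound and complete with respect to
conditional Kripke frames satisfying `R_a[x] ⊆ a` for all worlds `x` and all
upsets `a`. -/
theorem id_completeness (φ : CForm) :
    ICK {axId} φ ↔
      ∀ F : CondFrame,
        (∀ (x : F.X) (a : Set F.X), IsUpset F.le a →
          ∀ y, F.R a x y → y ∈ a) →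
        F.valid φ := by
  exact ⟨fun h F hF => id_soundness F hF φ h, id_complete_aux φ⟩
end

section
/- A conditional Kripke frame F = (X, ≤, 𝓡) validates the three axioms (id) p ⊳ p, (ct) ((p ⊳ q) ∧ ((p ∧ q) ⊳ r)) → (p ⊳ r), and (cm) ((p ⊳ q) ∧ (p ⊳ r)) → ((p ∧ q) ⊳ r) if and only if for all worlds x ∈ X and all upsets a, b: R_a[x] ⊆ a, and R_a[x] ⊆ b ⊆ a implies ↑(R_a[x]) = ↑(R_b[x]). -/
/-- Cautious transitivity `(ct)  ((p ⊳ q) ∧ ((p ∧ q) ⊳ r)) → (p ⊳ r)`. -/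
def axCt : CForm :=
  CForm.imp (CForm.and (CForm.cond (CForm.var 0) (CForm.var 1))
      (CForm.cond (CForm.and (CForm.var 0) (CForm.var 1)) (CForm.var 2)))
    (CForm.cond (CForm.var 0) (CForm.var 2))

/-- Cautious monotonicity `(cm)  ((p ⊳ q) ∧ (p ⊳ r)) → ((p ∧ q) ⊳ r)`. -/
def axCm : CForm :=
  CForm.imp (CForm.and (CForm.cond (CForm.var 0) (CForm.var 1))
      (CForm.cond (CForm.var 0) (CForm.var 2)))
    (CForm.cond (CForm.and (CForm.var 0) (CForm.var 1)) (CForm.var 2))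

/-- A conditional Kripke frame validates `(id)`, `(ct)` and
`(cm)` iff for all worlds `x` and all upsets `a, b`: `R_a[x] ⊆ a`, and
`R_a[x] ⊆ b ⊆ a` implies `↑(R_a[x]) = ↑(R_b[x])`. -/
theorem cautious_correspondence (F : CondFrame) :
    (F.valid axId ∧ F.valid axCt ∧ F.valid axCm) ↔
      ∀ (x : F.X) (a b : Set F.X), IsUpset F.le a → IsUpset F.le b →
        ({y | F.R a x y} ⊆ a ∧
          ({y | F.R a x y} ⊆ b → b ⊆ a →
            upCl F.le {y | F.R a x y} = upCl F.le {y | F.R b x y})) := by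
  have hupcl : ∀ s : Set F.X, IsUpset F.le (upCl F.le s) := by
    rintro s y z hyz ⟨w, hw, hwy⟩
    exact ⟨w, hw, F.le_trans hwy hyz⟩
  constructor
  · rintro ⟨hid, hct, hcm⟩ x a b ha hb
    refine ⟨fun y hy => hid (fun _ => a) (fun _ => ha) x y hy, fun hab hba => ?_⟩
    have key : ∀ c : Set F.X, IsUpset F.le c →
        ((∀ y, F.R b x y → y ∈ c) → ∀ y, F.R a x y → y ∈ c) ∧
        ((∀ y, F.R a x y → y ∈ c) → ∀ y, F.R b x y → y ∈ c) := by
      intro c hc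
      let V : ℕ → Set F.X := fun n => if n = 0 then a else if n = 1 then b else c
      have hV : ∀ p, IsUpset F.le (V p) := by
        intro p
        simp only [V]
        split_ifs <;> assumption
      have h1 := hct V hV x x (F.le_refl x)
      have h2 := hcm V hV x x (F.le_refl x)
      have e : a ∩ b = b := Set.inter_eq_right.2 hba
      simp [csat, V, e] at h1 h2
      exact ⟨fun h => h1 (fun y hy => hab hy) h, fun h => h2 (fun y hy => hab hy) h⟩
    apply Set.Subset.antisymm
    · rintro z ⟨y, hy, hyz⟩
      exact hupcl _ hyz ((key _ (hupcl {y | F.R b x y})).1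
        (fun w hw => ⟨w, hw, F.le_refl w⟩) y hy)
    · rintro z ⟨y, hy, hyz⟩
      exact hupcl _ hyz ((key _ (hupcl {y | F.R a x y})).2
        (fun w hw => ⟨w, hw, F.le_refl w⟩) y hy)
  · intro h
    have hint : ∀ V : ℕ → Set F.X, (∀ p, IsUpset F.le (V p)) →
        IsUpset F.le (V 0 ∩ V 1) :=
      fun V hV y z hyz hy => ⟨hV 0 hyz hy.1, hV 1 hyz hy.2⟩
    have heq : ∀ V : ℕ → Set F.X, (∀ p, IsUpset F.le (V p)) → ∀ x,
        (∀ y, F.R (V 0) x y → y ∈ V 1) →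
        upCl F.le {y | F.R (V 0) x y} = upCl F.le {y | F.R (V 0 ∩ V 1) x y} := by
      intro V hV x h1
      have h2 := h x (V 0) (V 0 ∩ V 1) (hV 0) (hint V hV)
      exact h2.2 (fun y hy => ⟨h2.1 hy, h1 y hy⟩) Set.inter_subset_left
    refine ⟨fun V hV x y hy => (h x (V 0) (V 0) (hV 0) (hV 0)).1 hy, ?_, ?_⟩
    · rintro V hV x0 x - ⟨h1, h2⟩ y hy
      have hm : y ∈ upCl F.le {y | F.R (V 0) x y} := ⟨y, hy, F.le_refl y⟩
      rw [heq V hV x h1] at hm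
      obtain ⟨w, hw, hwy⟩ := hm
      exact hV 2 hwy (h2 w hw)
    · rintro V hV x0 x - ⟨h1, h2⟩ y hy
      have hm : y ∈ upCl F.le {y | F.R (V 0 ∩ V 1) x y} := ⟨y, hy, F.le_refl y⟩
      rw [← heq V hV x h1] at hm
      obtain ⟨w, hw, hwy⟩ := hm
      exact hV 2 hwy (h2 w hw)
end
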